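/- Let K = ℚ[x]/(p(x)) where p(x) = x⁸ − 3x⁷ + 5x⁶ − 3x⁵ + 2x⁴ + 2x³ + 2x + 1 (an irreducible polynomial over ℚ), let t be the image of x in K, and let 𝓞_K be the ring of integers of K. Then the principal ideals (t + 1) and (t² − t − 1) of 𝓞_K are prime ideals, each of absolute norm 11, and the ideal (11) = 11𝓞_K factors as (11) = (t + 1)(t² − t − 1)𝒬₃ where 𝒬₃ is a prime ideal of absolute norm 11⁶. -/

import Mathlib

open Polynomial

/-- The polynomial `p(x) = x⁸ − 3x⁷ + 5x⁶ − 3x⁵ + 2x⁴ + 2x³ + 2x + 1` over `ℚ`. -/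
noncomputable def pK : ℚ[X] :=
  X ^ 8 - 3 * X ^ 7 + 5 * X ^ 6 - 3 * X ^ 5 + 2 * X ^ 4 + 2 * X ^ 3 + 2 * X + 1

theorem cert3 (F : Type) [Field F] (r : F) (hq : (3:F) = 0)
    (hf : (1) + (2)*r + (2)*r^3 + (2)*r^4 + (-3)*r^5 + (5)*r^6 + (-3)*r^7 + (1)*r^8 = 0) : r^27 ≠ r ∧ r^81 ≠ r := by
  have e3 : r^3 = (1)*r^3 := by linear_combination (0)*hf + (0)*hq
  have e6 : r^6 = (1)*r^6 := by
    have h : r^6 = r^3 * r^3 := by ring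
    rw [h, e3]
    linear_combination (0)*hf + (0)*hq
  have e9 : r^9 = (-1)*r + (1)*r^2 + (1)*r^4 + (1)*r^5 + (1)*r^7 := by
    have h : r^9 = r^3 * r^6 := by ring
    rw [h, e3, e6]
    linear_combination ((1)*r)*hf + ((-1)*r^2 + (-1)*r^4 + (-1)*r^5 + (1)*r^6 + (-2)*r^7 + (1)*r^8)*hq
  have e18 : r^18 = (-1) + (-1)*r^3 + (-1)*r^4 + (1)*r^5 + (1)*r^6 := by
    have h : r^18 = r^9 * r^9 := by ring
    rw [h, e9]
    linear_combination ((1) + (1)*r + (-1)*r^2 + (-1)*r^3 + (1)*r^6)*hf + ((-1)*r + (-1)*r^7 + (1)*r^8 + (1)*r^9 + (-1)*r^10 + (2)*r^11 + (-1)*r^12 + (1)*r^13)*hq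
  have e27 : r^27 = (-1)*r + (-1)*r^2 + (1)*r^3 + (-1)*r^4 + (-1)*r^6 + (-1)*r^7 := by
    have h : r^27 = r^9 * r^18 := by ring
    rw [h, e9, e18]
    linear_combination ((-1)*r + (-1)*r^2 + (1)*r^3 + (1)*r^4 + (1)*r^5)*hf + ((1)*r + (1)*r^2 + (-2)*r^6 + (-1)*r^7 + (-2)*r^9 + (1)*r^10 + (-1)*r^11 + (1)*r^12)*hq
  have e54 : r^54 = (-1)*r + (-1)*r^2 + (1)*r^3 + (-1)*r^4 + (1)*r^5 + (-1)*r^6 + (-1)*r^7 := by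
    have h : r^54 = r^27 * r^27 := by ring
    rw [h, e27]
    linear_combination ((1)*r + (1)*r^3 + (-1)*r^4 + (-1)*r^5 + (1)*r^6)*hf + ((-1)*r^4 + (2)*r^6 + (-2)*r^7 + (5)*r^8 + (-3)*r^9 + (1)*r^10 + (2)*r^11 + (-2)*r^12 + (2)*r^13)*hq
  have e81 : r^81 = (1) + (1)*r^2 + (-1)*r^4 + (1)*r^6 := by
    have h : r^81 = r^27 * r^54 := by ring
    rw [h, e27, e54]
    linear_combination ((-1) + (-1)*r + (-1)*r^2 + (1)*r^4 + (-1)*r^5 + (1)*r^6)*hf + ((1)*r + (1)*r^2 + (2)*r^3 + (1)*r^4 + (2)*r^6 + (-2)*r^7 + (3)*r^8 + (-3)*r^10 + (4)*r^11 + (-3)*r^12 + (2)*r^13)*hq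
  have k27 : r^27 ≠ r := by
    intro h
    rw [e27] at h
    have : (1:F) = 0 := by linear_combination ((-1)*r + (-1)*r^2 + (-1)*r^4 + (-1)*r^5 + (1)*r^6 + (-1)*r^7)*h + ((1) + (1)*r + (-1)*r^2 + (-1)*r^4 + (-1)*r^6)*hf + ((-1)*r + (-1)*r^2 + (-1)*r^3 + (-1)*r^4 + (1)*r^5 + (-1)*r^6 + (2)*r^8 + (-3)*r^9 + (3)*r^10 + (-3)*r^11 + (2)*r^12 + (-1)*r^13)*hq
    exact one_ne_zero this
  have k81 : r^81 ≠ r := by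
    intro h
    rw [e81] at h
    have : (1:F) = 0 := by linear_combination ((1) + (-1)*r^2 + (-1)*r^4 + (-1)*r^6 + (1)*r^7)*h + ((1)*r + (1)*r^2 + (1)*r^4 + (-1)*r^5)*hf + ((-1)*r^2 + (-1)*r^3 + (-2)*r^5 + (1)*r^6 + (-2)*r^7 + (2)*r^9 + (-3)*r^10 + (3)*r^11 + (-1)*r^12)*hq
    exact one_ne_zero this
  exact ⟨k27, k81⟩

theorem cert11 (F : Type) [Field F] (r : F) (hq : (11:F) = 0)
    (hf : (-3) + (-1)*r + (2)*r^3 + (-2)*r^4 + (1)*r^6 = 0) : r^121 ≠ r ∧ r^1331 ≠ r := by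
  have e11 : r^11 = (1) + (5)*r + (-2)*r^2 + (-4)*r^3 + (2)*r^4 + (4)*r^5 := by linear_combination ((4) + (4)*r + (-2)*r^2 + (2)*r^3 + (1)*r^5)*hf + ((1) + (1)*r + (1)*r^5 + (-1)*r^6)*hq
  have e22 : r^22 = (-4) + (4)*r + (1)*r^2 + (-2)*r^3 + (1)*r^4 + (-1)*r^5 := by
    have h : r^22 = r^11 * r^11 := by ring
    rw [h, e11]
    linear_combination ((2) + (1)*r + (4)*r^2 + (5)*r^3 + (5)*r^4)*hf + ((1) + (1)*r + (3)*r^2 + (-1)*r^3 + (-1)*r^4 + (4)*r^5 + (4)*r^6 + (-3)*r^7 + (-2)*r^8 + (1)*r^9 + (1)*r^10)*hq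
  have e44 : r^44 = (-2) + (3)*r + (-5)*r^2 + (4)*r^3 + (1)*r^4 + (-3)*r^5 := by
    have h : r^44 = r^22 * r^22 := by ring
    rw [h, e22]
    linear_combination ((5) + (-1)*r + (-4)*r^2 + (-2)*r^3 + (1)*r^4)*hf + ((3) + (-3)*r + (-1)*r^4 + (2)*r^5 + (-1)*r^6 + (-1)*r^7 + (1)*r^8)*hq
  have e55 : r^55 = (-3) + (-3)*r + (-2)*r^2 + (4)*r^4 + (-3)*r^5 := by
    have h : r^55 = r^11 * r^44 := by ring
    rw [h, e11, e44]
    linear_combination ((-4) + (-1)*r + (-5)*r^2 + (-2)*r^3 + (-1)*r^4)*hf + ((-1) + (-1)*r + (-2)*r^3 + (2)*r^5 + (-3)*r^6 + (-1)*r^7 + (3)*r^8 + (-1)*r^10)*hq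
  have e110 : r^110 = (-4)*r + (3)*r^2 + (2)*r^3 + (-3)*r^4 + (3)*r^5 := by
    have h : r^110 = r^55 * r^55 := by ring
    rw [h, e55]
    linear_combination ((-3) + (1)*r + (1)*r^2 + (-2)*r^3 + (-2)*r^4)*hf + ((2)*r + (2)*r^2 + (1)*r^3 + (-3)*r^4 + (-1)*r^5 + (1)*r^6 + (1)*r^7 + (1)*r^8 + (-2)*r^9 + (1)*r^10)*hq
  have e121 : r^121 = (-3) + (-3)*r + (1)*r^3 + (-4)*r^4 + (-3)*r^5 := by
    have h : r^121 = r^11 * r^110 := by ring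
    rw [h, e11, e110]
    linear_combination ((-1) + (-3)*r + (3)*r^2 + (5)*r^3 + (1)*r^4)*hf + ((-1)*r + (-1)*r^2 + (4)*r^3 + (3)*r^4 + (-4)*r^5 + (3)*r^7 + (-1)*r^8 + (-1)*r^9 + (1)*r^10)*hq
  have e242 : r^242 = (2) + (1)*r + (5)*r^2 + (-4)*r^3 + (2)*r^4 + (-5)*r^5 := by
    have h : r^242 = r^121 * r^121 := by ring
    rw [h, e121]
    linear_combination ((5) + (-5)*r^2 + (2)*r^3 + (-2)*r^4)*hf + ((2) + (2)*r + (-1)*r^2 + (-1)*r^3 + (2)*r^4 + (5)*r^5 + (1)*r^8 + (2)*r^9 + (1)*r^10)*hq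
  have e484 : r^484 = (-4) + (-1)*r + (4)*r^2 + (4)*r^3 + (-2)*r^4 + (-3)*r^5 := by
    have h : r^484 = r^242 * r^242 := by ring
    rw [h, e242]
    linear_combination ((1) + (-2)*r + (-5)*r^2 + (2)*r^3 + (3)*r^4)*hf + ((1) + (-1)*r^3 + (4)*r^4 + (-4)*r^5 + (1)*r^6 + (-6)*r^7 + (5)*r^8 + (-2)*r^9 + (2)*r^10)*hq
  have e605 : r^605 = (3) + (-2)*r + (1)*r^2 + (-1)*r^3 + (-5)*r^4 + (-2)*r^5 := by
    have h : r^605 = r^121 * r^484 := by ring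
    rw [h, e121, e484]
    linear_combination ((-3) + (-1)*r + (-4)*r^3 + (-2)*r^4)*hf + ((1)*r + (-1)*r^2 + (-3)*r^3 + (3)*r^5 + (1)*r^6 + (-3)*r^7 + (-1)*r^8 + (2)*r^9 + (1)*r^10)*hq
  have e1210 : r^1210 = (-2) + (3)*r + (5)*r^2 + (-1)*r^3 + (-3)*r^4 + (1)*r^5 := by
    have h : r^1210 = r^605 * r^605 := by ring
    rw [h, e605]
    linear_combination ((5)*r + (4)*r^2 + (-2)*r^3 + (4)*r^4)*hf + ((1) + (2)*r^2 + (-1)*r^3 + (-2)*r^4 + (1)*r^5 + (1)*r^6 + (-1)*r^7 + (3)*r^8 + (2)*r^9)*hq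
  have e1331 : r^1331 = (3) + (2)*r + (-3)*r^2 + (2)*r^3 + (2)*r^4 + (-3)*r^5 := by
    have h : r^1331 = r^121 * r^1210 := by ring
    rw [h, e121, e1210]
    linear_combination ((-1) + (2)*r + (-1)*r^2 + (5)*r^3 + (-3)*r^4)*hf + ((-2)*r^2 + (1)*r^4 + (1)*r^5 + (-4)*r^6 + (1)*r^8)*hq
  have k121 : r^121 ≠ r := by
    intro h
    rw [e121] at h
    have : (1:F) = 0 := by linear_combination ((-4) + (-5)*r + (-3)*r^2 + (3)*r^3 + (5)*r^4 + (4)*r^5)*h + ((3)*r + (5)*r^2 + (-2)*r^3 + (1)*r^4)*hf + ((-1) + (-2)*r + (-1)*r^2 + (1)*r^4 + (-1)*r^7 + (2)*r^8 + (3)*r^9 + (1)*r^10)*hq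
    exact one_ne_zero this
  have k1331 : r^1331 ≠ r := by
    intro h
    rw [e1331] at h
    have : (1:F) = 0 := by linear_combination ((1) + (2)*r + (2)*r^2 + (1)*r^3 + (-5)*r^4 + (3)*r^5)*h + ((-3) + (-4)*r + (3)*r^2 + (1)*r^3 + (-2)*r^4)*hf + ((-1) + (-2)*r + (1)*r^3 + (1)*r^4 + (-2)*r^5 + (-1)*r^6 + (3)*r^7 + (-2)*r^9 + (1)*r^10)*hq
    exact one_ne_zero this
  exact ⟨k121, k1331⟩

theorem irr_of (q : ℕ) [Fact q.Prime] (f : (ZMod q)[X]) (hm : f.Monic) (h1 : f ≠ 1)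
    (H : ∀ (F : Type) [Field F] [Algebra (ZMod q) F] (r : F) (d : ℕ), 1 ≤ d → d ≤ f.natDegree / 2 →
      aeval r f = 0 → r ^ (q ^ d) = r → False) : Irreducible f := by
  rw [hm.irreducible_iff_lt_natDegree_lt h1]
  intro k hk hkd hdvd
  rw [Finset.mem_Ioc] at hkd
  have hku : ¬ IsUnit k := by
    intro hu
    have := natDegree_eq_zero_of_isUnit hu
    omega
  obtain ⟨h, hirr, hhk⟩ := WfDvdMonoid.exists_irreducible_factor hku hk.ne_zero
  have : Fact (Irreducible h) := ⟨hirr⟩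
  have hle := natDegree_le_of_dvd hhk hk.ne_zero
  have hpos : 0 < h.natDegree := hirr.natDegree_pos
  have hfr : Module.finrank (ZMod q) (AdjoinRoot h) = h.natDegree :=
    (AdjoinRoot.powerBasis hirr.ne_zero).finrank.trans (AdjoinRoot.powerBasis_dim hirr.ne_zero)
  have : Module.Finite (ZMod q) (AdjoinRoot h) := (AdjoinRoot.powerBasis hirr.ne_zero).finite
  have : Finite (AdjoinRoot h) := Module.finite_of_finite (ZMod q)
  let : Fintype (AdjoinRoot h) := Fintype.ofFinite _
  refine H (AdjoinRoot h) (AdjoinRoot.root h) h.natDegree hpos (hle.trans hkd.2) ?_ ?_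
  · rw [AdjoinRoot.aeval_eq, AdjoinRoot.mk_eq_zero]
    exact hhk.trans hdvd
  · have hc : Fintype.card (AdjoinRoot h) = q ^ h.natDegree := by
      rw [← Nat.card_eq_fintype_card, Module.natCard_eq_pow_finrank (K := ZMod q), hfr, Nat.card_zmod]
    rw [← hc]
    exact FiniteField.pow_card _

/-- integral version of `pK` -/
noncomputable def pZ : ℤ[X] :=
  X ^ 8 - 3 * X ^ 7 + 5 * X ^ 6 - 3 * X ^ 5 + 2 * X ^ 4 + 2 * X ^ 3 + 2 * X + 1

theorem pZ_monic : pZ.Monic := by unfold pZ; monicity!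

theorem pZ_deg : pZ.natDegree = 8 := by unfold pZ; compute_degree!

theorem pZ_map : pZ.map (algebraMap ℤ ℚ) = pK := by
  unfold pZ pK
  simp [Polynomial.map_ofNat]

/-- the degree six factor mod 11 -/
noncomputable def gF : (ZMod 11)[X] := X ^ 6 - 2 * X ^ 4 + 2 * X ^ 3 - X - 3

instance fact11 : Fact (Nat.Prime 11) := ⟨by norm_num⟩

theorem gF_monic : gF.Monic := by unfold gF; monicity!

theorem gF_deg : gF.natDegree = 6 := by unfold gF; compute_degree!

theorem pow_aux {F : Type} [Field F] {r : F} {a b : ℕ} (h : r ^ a = r) (n : ℕ) (hb : b = a ^ n) :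
    r ^ b = r := by
  subst hb
  induction n with
  | zero => simp
  | succ n ih => rw [pow_succ, pow_mul, ih, h]

theorem gF_irr : Irreducible gF := by
  refine irr_of 11 gF gF_monic (fun h => ?_) ?_
  · have := gF_deg
    rw [h] at this
    simp at this
  · intro F _ _ r d hd1 hd2 hf hr
    rw [gF_deg] at hd2
    have hq : (11 : F) = 0 := by
      have : algebraMap (ZMod 11) F 11 = 0 := by
        rw [show (11 : ZMod 11) = 0 from by decide, map_zero]
      exact (map_ofNat (algebraMap (ZMod 11) F) 11).symm.trans this
    have hf' : (-3) + (-1)*r + (2)*r^3 + (-2)*r^4 + (1)*r^6 = 0 := by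
      rw [← hf]; unfold gF
      simp only [map_add, map_sub, map_mul, map_pow, aeval_X, map_ofNat]
      ring
    obtain ⟨k1, k2⟩ := cert11 F r hq hf'
    interval_cases d
    · exact k1 (pow_aux hr 2 (by norm_num))
    · exact k1 (pow_aux hr 1 (by norm_num))
    · exact k2 (pow_aux hr 1 (by norm_num))

instance fact3 : Fact (Nat.Prime 3) := ⟨by norm_num⟩

theorem pZ_irr : Irreducible pZ := by
  refine Monic.irreducible_of_irreducible_map (Int.castRingHom (ZMod 3)) _ pZ_monic ?_
  have hdeg : (pZ.map (Int.castRingHom (ZMod 3))).natDegree = 8 := by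
    rw [pZ_monic.natDegree_map, pZ_deg]
  refine irr_of 3 _ (pZ_monic.map _) (fun h => ?_) ?_
  · rw [h] at hdeg
    simp at hdeg
  · intro F _ _ r d hd1 hd2 hf hr
    rw [hdeg] at hd2
    have hq : (3 : F) = 0 := by
      have : algebraMap (ZMod 3) F 3 = 0 := by
        rw [show (3 : ZMod 3) = 0 from by decide, map_zero]
      exact (map_ofNat (algebraMap (ZMod 3) F) 3).symm.trans this
    have hf' : (1) + (2)*r + (2)*r^3 + (2)*r^4 + (-3)*r^5 + (5)*r^6 + (-3)*r^7 + (1)*r^8 = 0 := by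
      rw [← hf]; unfold pZ
      simp only [Polynomial.map_add, Polynomial.map_sub, Polynomial.map_mul, Polynomial.map_pow,
        Polynomial.map_X, Polynomial.map_ofNat, Polynomial.map_one, map_add, map_sub, map_mul,
        map_pow, aeval_X, map_ofNat, map_one]
      ring
    obtain ⟨k1, k2⟩ := cert3 F r hq hf'
    interval_cases d
    · exact k2 (pow_aux hr 4 (by norm_num))
    · exact k2 (pow_aux hr 2 (by norm_num))
    · exact k1 (pow_aux hr 1 (by norm_num))
    · exact k2 (pow_aux hr 1 (by norm_num))

theorem pK_irr : Irreducible pK := by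
  rw [← pZ_map]
  exact (pZ_monic.irreducible_iff_irreducible_map_fraction_map).1 pZ_irr

theorem pK_monic : pK.Monic := by rw [← pZ_map]; exact pZ_monic.map _

theorem pK_deg : pK.natDegree = 8 := by rw [← pZ_map, pZ_monic.natDegree_map, pZ_deg]

/-- An element `w(t)` of the ring of integers is not a unit as soon as there is a nontrivial ring
with a root `s` of `p` at which `w` vanishes. -/
theorem not_unit (R : Type) [CommRing R] (t : R) [IsDomain R] [CharZero R]
    [Algebra.IsIntegral ℤ R] (ht : aeval t pZ = 0) (w : ℤ[X])
    (S : Type) [CommRing S] [Nontrivial S] (s : S) (hs : aeval s pZ = 0) (hw : aeval s w = 0) :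
    ¬ IsUnit (aeval t w) := by
  intro hu
  have hmin : minpoly ℤ t = pZ := by
    have hti : IsIntegral ℤ t := Algebra.IsIntegral.isIntegral t
    exact eq_of_monic_of_associated (minpoly.monic hti) pZ_monic
      ((minpoly.irreducible hti).associated_of_dvd pZ_irr (minpoly.isIntegrallyClosed_dvd hti ht))
  let f : AdjoinRoot pZ →+* R := AdjoinRoot.lift (algebraMap ℤ R) t ht
  have hf : ∀ v : ℤ[X], f (AdjoinRoot.mk pZ v) = aeval t v := fun v => AdjoinRoot.lift_mk _ v
  have hinj : Function.Injective f := by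
    rw [injective_iff_map_eq_zero]
    intro x
    obtain ⟨v, rfl⟩ := AdjoinRoot.mk_surjective x
    intro hx
    rw [hf] at hx
    rw [AdjoinRoot.mk_eq_zero, ← hmin]
    exact minpoly.isIntegrallyClosed_dvd (Algebra.IsIntegral.isIntegral t) hx
  have hint : f.IsIntegral := by
    intro x
    have hx : IsIntegral ℤ x := Algebra.IsIntegral.isIntegral x
    have : (algebraMap ℤ R) = f.comp (algebraMap ℤ (AdjoinRoot pZ)) := RingHom.ext_int _ _
    obtain ⟨P, hP, hP0⟩ := hx
    refine ⟨P.map (algebraMap ℤ (AdjoinRoot pZ)), hP.map _, ?_⟩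
    rw [eval₂_map, ← this]
    exact hP0
  have := hint.isLocalHom hinj
  rw [← hf] at hu
  have hu' : IsUnit (AdjoinRoot.mk pZ w) := isUnit_of_map_unit f _ hu
  let k : AdjoinRoot pZ →+* S := AdjoinRoot.lift (algebraMap ℤ S) s hs
  have hk : k (AdjoinRoot.mk pZ w) = aeval s w := AdjoinRoot.lift_mk _ w
  have := hu'.map k
  rw [hk, hw] at this
  exact not_isUnit_zero this

theorem finrank8 (K : Type) [Field K] [NumberField K] (x : K) (hx : aeval x pK = 0)
    (htop : Algebra.adjoin ℚ {x} = ⊤) : Module.finrank ℚ K = 8 := by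
  have hmin : pK = minpoly ℚ x := minpoly.eq_of_irreducible_of_monic pK_irr hx pK_monic
  have hi : IsIntegral ℚ x := Algebra.IsIntegral.isIntegral x
  let pb := PowerBasis.ofAdjoinEqTop hi htop
  rw [pb.finrank, PowerBasis.ofAdjoinEqTop_dim, ← hmin, pK_deg]

theorem charP_aux (R : Type) [CommRing R] [Nontrivial R] (h : (11 : R) = 0) : CharP R 11 := by
  have h1 : ringChar R ∣ 11 := ringChar.dvd (by exact_mod_cast h)
  rcases (Nat.dvd_prime (by norm_num : Nat.Prime 11)).1 h1 with h2 | h2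
  · exact absurd h2 CharP.ringChar_ne_one
  · exact h2 ▸ ringChar.charP R

theorem arith {a b c : ℕ} (h : a * b * c = 11 ^ 8) (ha : a ≠ 1) (hb : b ≠ 1) (hc : 11 ^ 6 ≤ c) :
    a = 11 ∧ b = 11 ∧ c = 11 ^ 6 := by
  have hp : Nat.Prime 11 := by norm_num
  have ge : ∀ x, x ∣ 11 ^ 8 → x ≠ 1 → 11 ≤ x := by
    intro x hx hx1
    obtain ⟨k, -, rfl⟩ := (Nat.dvd_prime_pow hp).1 hx
    exact Nat.le_self_pow (fun h => hx1 (by simp [h])) 11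
  have ha' := ge a ⟨b * c, by rw [← h]; ring⟩ ha
  have hb' := ge b ⟨a * c, by rw [← h]; ring⟩ hb
  have hab : 121 ≤ a * b := Nat.mul_le_mul ha' hb'
  have hab2 : a * b ≤ 121 := by
    have : a * b * 11 ^ 6 ≤ 121 * 11 ^ 6 := by
      calc a * b * 11 ^ 6 ≤ a * b * c := Nat.mul_le_mul_left _ hc
        _ = _ := by rw [h]; norm_num
    exact Nat.le_of_mul_le_mul_right this (by norm_num)
  have hab3 : a * b = 121 := le_antisymm hab2 hab
  refine ⟨by nlinarith, by nlinarith, ?_⟩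
  rw [hab3] at h
  omega

open NumberField in
theorem main_aux (K : Type) [Field K] [NumberField K] (t : 𝓞 K)
    (hx : aeval (algebraMap (𝓞 K) K t) pK = 0)
    (htop : Algebra.adjoin ℚ {algebraMap (𝓞 K) K t} = ⊤) :
    ((Ideal.span {t + 1}).IsPrime ∧
        (Ideal.span {t ^ 2 - t - 1}).IsPrime ∧
        Ideal.absNorm (Ideal.span {t + 1}) = 11 ∧
        Ideal.absNorm (Ideal.span {t ^ 2 - t - 1}) = 11 ∧
        ∃ Q₃ : Ideal (𝓞 K),
          Q₃.IsPrime ∧ Ideal.absNorm Q₃ = 11 ^ 6 ∧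
          Ideal.span {(11 : 𝓞 K)} =
            Ideal.span {t + 1} * Ideal.span {t ^ 2 - t - 1} * Q₃) := by
  have hfr := finrank8 K _ hx htop
  have ht : aeval t pZ = 0 := by
    apply RingOfIntegers.coe_injective
    rw [map_zero, ← aeval_algebraMap_apply, ← hx, ← pZ_map, aeval_map_algebraMap]
  have ht' : t^8 - 3*t^7 + 5*t^6 - 3*t^5 + 2*t^4 + 2*t^3 + 2*t + 1 = 0 := by
    rw [← ht]; unfold pZ
    simp only [map_add, map_sub, map_mul, map_pow, aeval_X, map_ofNat, map_one]
  set a : 𝓞 K := t + 1 with ha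
  set b : 𝓞 K := t ^ 2 - t - 1 with hb
  obtain ⟨c, hc⟩ : ∃ c : 𝓞 K, c = (69) + (52)*t + (-93)*t^2 + (317)*t^3 + (-362)*t^4 + (353)*t^5
    + (-177)*t^6 + (49)*t^7 := ⟨_, rfl⟩
  have habc : a * b * c = 11 := by
    rw [ha, hb, hc]
    linear_combination (-((80) + (30)*t + (-49)*t^2)) * ht'
  have hau : ¬ IsUnit a := by
    have := not_unit (𝓞 K) t ht (X + 1) (ZMod 11) (-1)
      (by unfold pZ; simp only [map_add, map_sub, map_mul, map_pow, aeval_X, map_ofNat, map_one]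
          decide)
      (by simp)
    simpa [ha] using this
  have hbu : ¬ IsUnit b := by
    have := not_unit (𝓞 K) t ht (X ^ 2 - X - 1) (ZMod 11) 4
      (by unfold pZ; simp only [map_add, map_sub, map_mul, map_pow, aeval_X, map_ofNat, map_one]
          decide)
      (by simp only [map_add, map_sub, map_mul, map_pow, aeval_X, map_ofNat, map_one]
          decide)
    simpa [hb] using this
  have : Fact (Irreducible gF) := ⟨gF_irr⟩
  have hcu : ¬ IsUnit c := by
    have h11 : (11 : AdjoinRoot gF) = 0 := by
      have : algebraMap (ZMod 11) (AdjoinRoot gF) 11 = 0 := by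
        rw [show (11 : ZMod 11) = 0 from by decide, map_zero]
      exact (map_ofNat (algebraMap (ZMod 11) (AdjoinRoot gF)) 11).symm.trans this
    have hr : (AdjoinRoot.root gF) ^ 6 - 2 * (AdjoinRoot.root gF) ^ 4 + 2 * (AdjoinRoot.root gF) ^ 3
        - AdjoinRoot.root gF - 3 = 0 := by
      have : aeval (AdjoinRoot.root gF) gF = 0 := by
        rw [AdjoinRoot.aeval_eq, AdjoinRoot.mk_self]
      rw [← this]
      conv_rhs => enter [2]; unfold gF
      simp only [map_add, map_sub, map_mul, map_pow, aeval_X, map_ofNat, map_one]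
    generalize AdjoinRoot.root gF = x at hr
    have := not_unit (𝓞 K) t ht (69 + 52 * X - 93 * X ^ 2 + 317 * X ^ 3 - 362 * X ^ 4 + 353 * X ^ 5
        - 177 * X ^ 6 + 49 * X ^ 7) (AdjoinRoot gF) x
      (by unfold pZ; simp only [map_add, map_sub, map_mul, map_pow, aeval_X, map_ofNat, map_one]
          linear_combination ((-4) + (-3)*x + (1)*x^2) * hr
            + ((-1) + (-1)*x + (1)*x^3 + (-1)*x^5 + (1)*x^6) * h11)
      (by simp only [map_add, map_sub, map_mul, map_pow, aeval_X, map_ofNat, map_one]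
          linear_combination ((-1) + (5)*x) * hr + ((6) + (6)*x + (-8)*x^2 + (29)*x^3 + (-34)*x^4
            + (33)*x^5 + (-16)*x^6 + (4)*x^7) * h11)
    intro hu
    apply this
    convert hu using 1
    rw [hc]
    simp only [map_add, map_sub, map_mul, map_pow, aeval_X, map_ofNat, map_one]
    ring
  have hc0 : c ≠ 0 := by
    rintro h0
    rw [h0, mul_zero] at habc
    norm_num at habc
  -- the quotient by `(c)`
  have : Nontrivial (𝓞 K ⧸ Ideal.span {c}) := by
    rw [Ideal.Quotient.nontrivial_iff, Ne, Ideal.span_singleton_eq_top]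
    exact hcu
  have : Finite (𝓞 K ⧸ Ideal.span {c}) :=
    Ideal.finiteQuotientOfFreeOfNeBot _ (by simpa using hc0)
  have h11 : (11 : 𝓞 K ⧸ Ideal.span {c}) = 0 := by
    have : Ideal.Quotient.mk (Ideal.span {c}) 11 = 0 := by
      rw [Ideal.Quotient.eq_zero_iff_mem, Ideal.mem_span_singleton]
      exact ⟨a * b, by rw [← habc]; ring⟩
    exact this
  have := charP_aux _ h11
  have hg : eval₂ (ZMod.castHom (dvd_refl 11) (𝓞 K ⧸ Ideal.span {c}))
      (Ideal.Quotient.mk (Ideal.span {c}) t) gF = 0 := by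
    have : Ideal.Quotient.mk (Ideal.span {c}) (t ^ 6 - 2 * t ^ 4 + 2 * t ^ 3 - t - 3) = 0 := by
      rw [Ideal.Quotient.eq_zero_iff_mem, Ideal.mem_span_singleton]
      refine ⟨(2) + (4)*t + a * b * ((-13) + (-35)*t + (-2)*t^2 + (-24)*t^3 + (-50)*t^4 + (68)*t^5
        + (-97)*t^6 + (56)*t^7 + (-18)*t^8), ?_⟩
      have e : ∀ z w : 𝓞 K, c * (z + a * b * w) = c * z + 11 * w := by
        intro z w; rw [← habc]; ring
      rw [e, hc]
      linear_combination 2 * ht'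
    rw [← this]
    unfold gF
    simp [eval₂_add, eval₂_sub, eval₂_mul, eval₂_pow, eval₂_X, eval₂_ofNat]
    rfl
  let φ : AdjoinRoot gF →+* 𝓞 K ⧸ Ideal.span {c} := AdjoinRoot.lift _ _ hg
  have hφ : Function.Injective φ := φ.injective
  have hcard : Nat.card (AdjoinRoot gF) = 11 ^ 6 := by
    have hfg : Module.finrank (ZMod 11) (AdjoinRoot gF) = gF.natDegree :=
      (AdjoinRoot.powerBasis gF_irr.ne_zero).finrank.trans
        (AdjoinRoot.powerBasis_dim gF_irr.ne_zero)
    have : Module.Finite (ZMod 11) (AdjoinRoot gF) :=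
      (AdjoinRoot.powerBasis gF_irr.ne_zero).finite
    rw [Module.natCard_eq_pow_finrank (K := ZMod 11), hfg, Nat.card_zmod, gF_deg]
  have hNc : Ideal.absNorm (Ideal.span {c}) = Nat.card (𝓞 K ⧸ Ideal.span {c}) := rfl
  have hge : 11 ^ 6 ≤ Ideal.absNorm (Ideal.span {c}) := by
    rw [hNc, ← hcard]
    exact Nat.card_le_card_of_injective φ hφ
  have hprod : Ideal.span {(11 : 𝓞 K)} = Ideal.span {a} * Ideal.span {b} * Ideal.span {c} := by
    rw [Ideal.span_singleton_mul_span_singleton, Ideal.span_singleton_mul_span_singleton, habc]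
  have hN : Ideal.absNorm (Ideal.span {a}) * Ideal.absNorm (Ideal.span {b})
      * Ideal.absNorm (Ideal.span {c}) = 11 ^ 8 := by
    rw [← map_mul, ← map_mul, ← hprod, Ideal.absNorm_span_singleton]
    have : (11 : 𝓞 K) = algebraMap ℤ (𝓞 K) 11 := by simp
    rw [this, Algebra.norm_algebraMap, RingOfIntegers.rank, hfr]
    norm_num
  obtain ⟨h1, h2, h3⟩ := arith hN
    (by rw [Ne, Ideal.absNorm_eq_one_iff, Ideal.span_singleton_eq_top]; exact hau)
    (by rw [Ne, Ideal.absNorm_eq_one_iff, Ideal.span_singleton_eq_top]; exact hbu) hge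
  refine ⟨Ideal.isPrime_of_irreducible_absNorm (by rw [h1]; norm_num [Nat.irreducible_iff_nat_prime]),
    Ideal.isPrime_of_irreducible_absNorm (by rw [h2]; norm_num [Nat.irreducible_iff_nat_prime]),
    h1, h2, Ideal.span {c}, ?_, h3, hprod⟩
  have hbij : Function.Bijective φ := by
    have : Finite (AdjoinRoot gF) := Nat.finite_of_card_ne_zero (by rw [hcard]; norm_num)
    rw [Nat.bijective_iff_injective_and_card]
    exact ⟨hφ, by rw [hcard, ← hNc, h3]⟩
  have hfield : IsField (𝓞 K ⧸ Ideal.span {c}) :=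
    (RingEquiv.ofBijective φ hbij).symm.toMulEquiv.isField (Field.toIsField _)
  exact (Ideal.Quotient.maximal_of_isField _ hfield).isPrime

/-- `p(x)` is irreducible over `ℚ`; and if `K = ℚ[x]/(p(x))` (i.e. any
number field generated over `ℚ` by a root `t` of `p`, with `t` in the ring of
integers `𝓞_K`), then the principal ideals `(t + 1)` and `(t² − t − 1)` of `𝓞_K` are
prime of absolute norm `11`, and `(11) = (t + 1)(t² − t − 1)𝒬₃` with `𝒬₃` prime of
absolute norm `11⁶`. -/
theorem stmt_13 :
    Irreducible pK ∧
    ∀ (K : Type) [Field K] [NumberField K] (t : NumberField.RingOfIntegers K),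
      aeval (algebraMap (NumberField.RingOfIntegers K) K t) pK = 0 →
      Algebra.adjoin ℚ {algebraMap (NumberField.RingOfIntegers K) K t} = ⊤ →
      ((Ideal.span {t + 1}).IsPrime ∧
        (Ideal.span {t ^ 2 - t - 1}).IsPrime ∧
        Ideal.absNorm (Ideal.span {t + 1}) = 11 ∧
        Ideal.absNorm (Ideal.span {t ^ 2 - t - 1}) = 11 ∧
        ∃ Q₃ : Ideal (NumberField.RingOfIntegers K),
          Q₃.IsPrime ∧ Ideal.absNorm Q₃ = 11 ^ 6 ∧
          Ideal.span {(11 : NumberField.RingOfIntegers K)} =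
            Ideal.span {t + 1} * Ideal.span {t ^ 2 - t - 1} * Q₃) := by
  exact ⟨pK_irr, fun K _ _ t hx htop => main_aux K t hx htop⟩
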